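/- Arithmetic-coding round-trip correctness: for any token sequence t_1, …, t_n over a finite alphabet with conditional probability models P_1, …, P_n (each P_i depending only on t_1, …, t_{i−1}, with all probabilities strictly positive and summing to 1), if r is any real number in the final encoding interval [I_low, I_high) produced by the arithmetic-coding encoder, then the decoder that repeatedly selects the unique symbol v with F_i(v) ≤ r < F_i(v) + P_i(v) and updates r ← (r − F_i(v))/P_i(v) outputs exactly t_1, …, t_n in order. -/

import Mathlib

/-!
The final interval is nested in every intermediate interval `[l, h)` of the encoder. The affine map
`x ↦ (x - l) / (h - l)` sends `[l, h)` onto `[0, 1)` and the next encoding interval onto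
`[F(t), F(t) + P(t))`, so the rescaled value of `r` lies in the slot of the next token `t`. Slots of
distinct symbols are disjoint, so the decoder picks `t`, and its update is exactly the change from
the rescaling by the current interval to the rescaling by the next one. Induction on the remaining
tokens (`decode_rescale`) then recovers the sequence.
-/

variable {α : Type*} [Fintype α] [LinearOrder α]

/-- The cumulative probability strictly below a symbol `v`:
`F(v) = ∑_{w < v} P(w)`. -/
def cumBelow (P : α → ℝ) (v : α) : ℝ :=
  ∑ w ∈ Finset.univ.filter (· < v), P w

/-- One arithmetic-coding step: given the model output `P` for the current
position, the current interval `(l, h)` is replaced by the subinterval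
corresponding to token `t`. -/
def encStep (P : α → ℝ) (lh : ℝ × ℝ) (t : α) : ℝ × ℝ :=
  (lh.1 + (lh.2 - lh.1) * cumBelow P t,
   lh.1 + (lh.2 - lh.1) * (cumBelow P t + P t))

/-- Arithmetic-coding encoder, processing the remaining tokens starting from
the already-processed prefix `s` and current interval `lh`. -/
def encodeAux (M : List α → α → ℝ) : List α → ℝ × ℝ → List α → ℝ × ℝ
  | _, lh, [] => lh
  | s, lh, t :: ts => encodeAux M (s ++ [t]) (encStep (M s) lh t) ts

/-- Arithmetic-coding encoder: maps a token sequence to its final interval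
`(I_low, I_high)`, starting from `[0, 1)`. -/
def encode (M : List α → α → ℝ) (ts : List α) : ℝ × ℝ :=
  encodeAux M [] (0, 1) ts

/-- The symbol selected by the decoder: the (unique) `v` with
`F(v) ≤ r < F(v) + P(v)`, if one exists. -/
noncomputable def pick [Nonempty α] (P : α → ℝ) (r : ℝ) : α :=
  if h : ∃ v : α, cumBelow P v ≤ r ∧ r < cumBelow P v + P v then h.choose
  else Classical.arbitrary α

/-- Arithmetic-coding decoder: starting from the already-decoded prefix `s`
and current value `r`, decode `n` further tokens, at each step choosing the
unique symbol whose cumulative interval contains `r` and rescaling `r`. -/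
noncomputable def decode [Nonempty α] (M : List α → α → ℝ) :
    ℕ → List α → ℝ → List α
  | 0, _, _ => []
  | n + 1, s, r =>
    let v := pick (M s) r
    v :: decode M n (s ++ [v]) ((r - cumBelow (M s) v) / M s v)

lemma cumBelow_nonneg {P : α → ℝ} (hP : ∀ v, 0 < P v) (v : α) : 0 ≤ cumBelow P v :=
  Finset.sum_nonneg fun w _ => (hP w).le

lemma cumBelow_add (P : α → ℝ) (v : α) :
    cumBelow P v + P v = ∑ w ∈ Finset.univ.filter (· ≤ v), P w := by
  have h : Finset.univ.filter (· ≤ v) = insert v (Finset.univ.filter (· < v)) := by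
    ext w
    simp [le_iff_eq_or_lt]
  rw [h, Finset.sum_insert (by simp), cumBelow, add_comm]

lemma cumBelow_add_le_one {P : α → ℝ} (hP : ∀ v, 0 < P v) (hsum : ∑ v, P v = 1) (v : α) :
    cumBelow P v + P v ≤ 1 := by
  rw [cumBelow_add, ← hsum]
  exact Finset.sum_le_sum_of_subset_of_nonneg (Finset.filter_subset _ _) fun w _ _ => (hP w).le

/-- The slots `[F(v), F(v) + P(v))` are arranged from left to right in the order of the alphabet. -/
lemma cumBelow_add_le_cumBelow {P : α → ℝ} (hP : ∀ v, 0 < P v) {v w : α} (hvw : v < w) :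
    cumBelow P v + P v ≤ cumBelow P w := by
  rw [cumBelow_add]
  refine Finset.sum_le_sum_of_subset_of_nonneg ?_ fun u _ _ => (hP u).le
  intro u hu
  simp only [Finset.mem_filter, Finset.mem_univ, true_and] at hu ⊢
  exact hu.trans_lt hvw

lemma pick_eq [Nonempty α] {P : α → ℝ} (hP : ∀ v, 0 < P v) {x : ℝ} {t : α}
    (h₁ : cumBelow P t ≤ x) (h₂ : x < cumBelow P t + P t) : pick P x = t := by
  have hex : ∃ v : α, cumBelow P v ≤ x ∧ x < cumBelow P v + P v := ⟨t, h₁, h₂⟩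
  rw [pick, dif_pos hex]
  obtain ⟨hv₁, hv₂⟩ := hex.choose_spec
  rcases lt_trichotomy hex.choose t with hlt | heq | hgt
  · linarith [cumBelow_add_le_cumBelow hP hlt]
  · exact heq
  · linarith [cumBelow_add_le_cumBelow hP hgt]

lemma encStep_sub (P : α → ℝ) (lh : ℝ × ℝ) (t : α) :
    (encStep P lh t).2 - (encStep P lh t).1 = (lh.2 - lh.1) * P t := by
  simp only [encStep]
  ring

lemma encStep_lt {P : α → ℝ} (hP : ∀ v, 0 < P v) {lh : ℝ × ℝ} (hlh : lh.1 < lh.2) (t : α) :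
    (encStep P lh t).1 < (encStep P lh t).2 := by
  rw [← sub_pos, encStep_sub]
  exact mul_pos (sub_pos.2 hlh) (hP t)

lemma encodeAux_nested {M : List α → α → ℝ} (hpos : ∀ s v, 0 < M s v)
    (hsum : ∀ s, ∑ v, M s v = 1) (ts : List α) :
    ∀ (s : List α) (lh : ℝ × ℝ), lh.1 < lh.2 →
      lh.1 ≤ (encodeAux M s lh ts).1 ∧ (encodeAux M s lh ts).2 ≤ lh.2 := by
  induction ts with
  | nil => exact fun s lh _ => ⟨le_rfl, le_rfl⟩
  | cons t ts ih =>
    intro s lh hlh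
    obtain ⟨h₁, h₂⟩ := ih (s ++ [t]) (encStep (M s) lh t) (encStep_lt (hpos s) hlh t)
    have hd : 0 ≤ lh.2 - lh.1 := (sub_pos.2 hlh).le
    refine ⟨le_trans ?_ h₁, h₂.trans ?_⟩
    · exact le_add_of_nonneg_right (mul_nonneg hd (cumBelow_nonneg (hpos s) t))
    · have := mul_le_mul_of_nonneg_left (cumBelow_add_le_one (hpos s) (hsum s) t) hd
      simp only [encStep]
      linarith

/-- Round trip from an arbitrary intermediate state: the decoder has to start from `r` rescaled by
the current interval `lh`. -/
lemma decode_rescale [Nonempty α] {M : List α → α → ℝ} (hpos : ∀ s v, 0 < M s v)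
    (hsum : ∀ s, ∑ v, M s v = 1) (r : ℝ) (ts : List α) :
    ∀ (s : List α) (lh : ℝ × ℝ), lh.1 < lh.2 →
      (encodeAux M s lh ts).1 ≤ r → r < (encodeAux M s lh ts).2 →
      decode M ts.length s ((r - lh.1) / (lh.2 - lh.1)) = ts := by
  induction ts with
  | nil => exact fun _ _ _ _ _ => rfl
  | cons t ts ih =>
    intro s lh hlh hlow hhigh
    have hd : 0 < lh.2 - lh.1 := sub_pos.2 hlh
    have hstep := encStep_lt (hpos s) hlh t
    obtain ⟨h₁, h₂⟩ := encodeAux_nested hpos hsum ts (s ++ [t]) _ hstep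
    have hr₁ : (encStep (M s) lh t).1 ≤ r := h₁.trans hlow
    have hr₂ : r < (encStep (M s) lh t).2 := lt_of_lt_of_le hhigh h₂
    have hpick : pick (M s) ((r - lh.1) / (lh.2 - lh.1)) = t := by
      simp only [encStep] at hr₁ hr₂
      apply pick_eq (hpos s)
      · rw [le_div_iff₀ hd]
        linarith
      · rw [div_lt_iff₀ hd]
        linarith
    have hupd : ((r - lh.1) / (lh.2 - lh.1) - cumBelow (M s) t) / M s t =
        (r - (encStep (M s) lh t).1) /
          ((encStep (M s) lh t).2 - (encStep (M s) lh t).1) := by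
      have := (hpos s t).ne'
      have := hd.ne'
      rw [encStep_sub]
      simp only [encStep]
      field_simp
      ring
    simp only [List.length_cons, decode, hpick, hupd]
    rw [ih (s ++ [t]) _ hstep hlow hhigh]

/-- Arithmetic-coding round-trip correctness: decoding any real number in the
final encoding interval of a token sequence recovers the sequence exactly. -/
theorem arithmetic_coding_roundtrip [Nonempty α] (M : List α → α → ℝ)
    (hpos : ∀ (s : List α) (v : α), 0 < M s v)
    (hsum : ∀ s : List α, ∑ v : α, M s v = 1)
    (ts : List α) (r : ℝ)
    (hlow : (encode M ts).1 ≤ r) (hhigh : r < (encode M ts).2) :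
    decode M ts.length [] r = ts := by
  simpa using decode_rescale hpos hsum r ts [] (0, 1) zero_lt_one hlow hhigh
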